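/- arXiv:1801.02228 — 6 statements merged into one kernel-verified Lean document; each statement's English description precedes it below -/
import Mathlib

section
/- Let a, b, c, d, k be integers such that a is odd, bc + d is odd, k ≠ 0, and the 2-adic valuation v₂(k) is not divisible by 3. Suppose the polynomial aX³ + bX² + cX + d is irreducible over ℚ and its discriminant is a perfect square (a square of a rational integer). Then the cubic Thue equation ax³ + bx²y + cxy² + dy³ = k has no solution in integers x, y. -/
/-!
The discriminant is congruent to `b * c + d` modulo 2, so it is an odd square, hence `1` modulo 8.
If the cubic had a root modulo 2, it would be the product of a linear factor and `X² + X + 1` there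
(`b, c` even and `d` odd, or `b, c` odd and `d` even), and then the discriminant would be `5`
modulo 8 (the case of Stickelberger's theorem needed here). Hence `d` and `b + c` are odd, i.e. the
cubic is irreducible modulo 2 (`odd_coeffs_of_disc_eq_sq`). The binary form is therefore even only
when `x` and `y` are both even, and then 8 can be divided out, so by descent the 2-adic valuation of
each nonzero value of the form is a multiple of 3 (`three_dvd_padicValInt_of_form_eq`).
-/

open Polynomial

lemma odd_coeffs_of_disc_eq_sq (a b c d s : ℤ) (ha : Odd a) (hbcd : Odd (b * c + d))
    (hs : b ^ 2 * c ^ 2 - 4 * a * c ^ 3 - 4 * b ^ 3 * d - 27 * a ^ 2 * d ^ 2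
      + 18 * a * b * c * d = s ^ 2) : Odd d ∧ Odd (b + c) := by
  have ha2 : a % 2 = 1 := Int.odd_iff.mp ha
  have hbcd2 : (b * c + d) % 2 = 1 := Int.odd_iff.mp hbcd
  -- In `ZMod 8` the equation `4 * n = 4` says that `n` is odd.
  have key : ∀ a b c d s : ZMod 8, 4 * a = 4 → 4 * (b * c + d) = 4 →
      b ^ 2 * c ^ 2 - 4 * a * c ^ 3 - 4 * b ^ 3 * d - 27 * a ^ 2 * d ^ 2
        + 18 * a * b * c * d = s ^ 2 → 4 * d = 4 ∧ 4 * (b + c) = 4 := by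
    decide +kernel
  have cast_iff : ∀ n : ℤ, (4 * (n : ZMod 8) = 4) ↔ n % 2 = 1 := by
    intro n
    have h := ZMod.intCast_eq_intCast_iff' (4 * n) 4 8
    push_cast at h
    rw [h]
    omega
  have h := key a b c d s ((cast_iff a).mpr ha2)
    (by exact_mod_cast (cast_iff (b * c + d)).mpr hbcd2) (by exact_mod_cast congrArg _ hs)
  refine ⟨Int.odd_iff.mpr ((cast_iff d).mp h.1), Int.odd_iff.mpr ((cast_iff (b + c)).mp ?_)⟩
  exact_mod_cast h.2

lemma even_of_even_form (a b c d x y : ℤ) (ha : Odd a) (hd : Odd d) (hbc : Odd (b + c))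
    (h : Even (a * x ^ 3 + b * x ^ 2 * y + c * x * y ^ 2 + d * y ^ 3)) : Even x ∧ Even y := by
  rw [← Int.not_even_iff_odd] at ha hd hbc
  simp only [Int.even_add, Int.even_mul, Int.even_pow] at h hbc
  tauto

lemma three_dvd_padicValInt_of_form_eq (a b c d : ℤ) (ha : Odd a) (hd : Odd d)
    (hbc : Odd (b + c)) (n : ℕ) : ∀ k x y : ℤ, k.natAbs = n → k ≠ 0 →
      a * x ^ 3 + b * x ^ 2 * y + c * x * y ^ 2 + d * y ^ 3 = k → 3 ∣ padicValInt 2 k := by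
  induction n using Nat.strong_induction_on with
  | _ n ih =>
    intro k x y hn hk h
    by_cases hev : Even k
    · obtain ⟨⟨u, rfl⟩, ⟨v, rfl⟩⟩ := even_of_even_form a b c d x y ha hd hbc (h ▸ hev)
      obtain ⟨m, hm⟩ : ∃ m, a * u ^ 3 + b * u ^ 2 * v + c * u * v ^ 2 + d * v ^ 3 = m := ⟨_, rfl⟩
      have hkm : k = 2 ^ 3 * m := by rw [← h, ← hm]; ring
      have hm0 : m ≠ 0 := by rintro rfl; exact hk (by simpa using hkm)
      have hdvd := ih m.natAbs (by omega) m u v rfl hm0 hm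
      have hval : padicValInt 2 ((2 : ℤ) ^ 3) = 3 := by
        rw [padicValInt, Int.natAbs_pow]
        exact padicValNat.prime_pow (p := 2) 3
      rw [hkm, padicValInt.mul (by norm_num) hm0, hval]
      omega
    · rw [padicValInt.eq_zero_of_not_dvd (fun h2 => hev (even_iff_two_dvd.mpr (by simpa using h2)))]
      exact dvd_zero 3

theorem stmt_0 (a b c d k : ℤ) (ha : Odd a) (hbcd : Odd (b * c + d)) (hk : k ≠ 0)
    (hv : ¬ (3 ∣ padicValInt 2 k))
    (hirr : Irreducible (C (a : ℚ) * X ^ 3 + C (b : ℚ) * X ^ 2 + C (c : ℚ) * X + C (d : ℚ)))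
    (hsq : ∃ s : ℤ, b ^ 2 * c ^ 2 - 4 * a * c ^ 3 - 4 * b ^ 3 * d - 27 * a ^ 2 * d ^ 2
      + 18 * a * b * c * d = s ^ 2) :
    ¬ ∃ x y : ℤ, a * x ^ 3 + b * x ^ 2 * y + c * x * y ^ 2 + d * y ^ 3 = k := by
  rintro ⟨x, y, hxy⟩
  obtain ⟨s, hs⟩ := hsq
  obtain ⟨hd, hbc⟩ := odd_coeffs_of_disc_eq_sq a b c d s ha hbcd hs
  exact hv (three_dvd_padicValInt_of_form_eq a b c d ha hd hbc _ k x y rfl hk hxy)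
end

section
/- Let a, b, c, d be integers such that a is odd and bc + d is odd, and suppose the polynomial aX³ + bX² + cX + d is irreducible over ℚ with discriminant a perfect square. Then for all integers x, y not both zero, the value ax³ + bx²y + cxy² + dy³ is nonzero and its 2-adic valuation is divisible by 3. -/
/-!
Modulo 2 the hypotheses leave four cubics. Two of them, `X³ + 1` and `X³ + X² + X`, are a linear
factor times `X² + X + 1`; lifts of these have discriminant `≡ 5 (mod 8)`, which is not a square
(`parity_of_disc_sq`). The other two, `X³ + X + 1` and `X³ + X² + 1`, are irreducible over `𝔽₂`, so
the form takes an even value only when `x` and `y` are both even (`form_odd`). Since the form is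
homogeneous of degree 3, dividing both variables by 2 lowers the valuation by exactly 3, and descent
on `|x| + |y|` ends at an odd value. Nonvanishing comes from the same descent.
-/

open Polynomial

lemma odd_sq_eq {n : ℤ} (h : Odd n) : ∃ t, n ^ 2 = 8 * t + 1 := by
  obtain ⟨k, rfl⟩ := h
  obtain ⟨m, hm⟩ := Int.even_mul_succ_self k
  exact ⟨m, by linear_combination 4 * hm⟩

/-- A square discriminant excludes the reductions `X³ + 1` and `X³ + X² + X` modulo 2, leaving the
two irreducible cubics over `𝔽₂`. -/
lemma parity_of_disc_sq {a b c d s : ℤ} (ha : Odd a) (hbcd : Odd (b * c + d))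
    (hs : b ^ 2 * c ^ 2 - 4 * a * c ^ 3 - 4 * b ^ 3 * d - 27 * a ^ 2 * d ^ 2
      + 18 * a * b * c * d = s ^ 2) : Odd d ∧ Odd (b + c) := by
  -- In both excluded cases the discriminant is `8k + 5`, whereas an odd square is `8t + 1`.
  have key : ∀ k, s ^ 2 ≠ 8 * k + 5 := by
    intro k hk
    have hodd : Odd s := by
      rw [← Int.odd_pow' (n := 2) two_ne_zero, hk]
      exact ⟨4 * k + 2, by ring⟩
    obtain ⟨t, ht⟩ := odd_sq_eq hodd
    omega
  rcases Int.even_or_odd d with hd | hd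
  · exfalso
    have hbc : Odd (b * c) := by
      have := hbcd.sub_even hd
      simpa using this
    obtain ⟨hb, hc⟩ := Int.odd_mul.1 hbc
    obtain ⟨D, rfl⟩ := hd
    obtain ⟨t, ht⟩ := odd_sq_eq hbc
    obtain ⟨m, hm⟩ := ha.mul (hc.pow (n := 3))
    obtain ⟨r, hr⟩ : Even (a * D * (3 * (a * D) - b * c)) := by
      rcases Int.even_or_odd (a * D) with h | h
      · exact h.mul_right _
      · exact (((show Odd (3 : ℤ) by decide).mul h).sub_odd hbc).mul_left _
    exact key (t - m - b ^ 3 * D - 9 * r - 1)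
      (by linear_combination -hs + ht - 4 * hm - 36 * hr)
  · refine ⟨hd, ?_⟩
    have hbc : Even (b * c) := by
      have := hbcd.sub_odd hd
      simpa using this
    by_contra hcon
    rw [Int.not_odd_iff_even] at hcon
    have hb : Even b ∧ Even c := by grind
    obtain ⟨⟨B, rfl⟩, ⟨E, rfl⟩⟩ := hb
    obtain ⟨t, ht⟩ := odd_sq_eq (ha.mul hd)
    exact key (2 * B ^ 2 * E ^ 2 - 4 * a * E ^ 3 - 4 * B ^ 3 * d + 9 * a * B * E * d - 27 * t - 4)
      (by linear_combination -hs - 27 * ht)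

/-- An irreducible binary cubic over `𝔽₂` has no nontrivial zero. -/
lemma form_odd {a b c d x y : ℤ} (ha : Odd a) (hd : Odd d) (hbc : Odd (b + c))
    (hxy : ¬ (Even x ∧ Even y)) :
    Odd (a * x ^ 3 + b * x ^ 2 * y + c * x * y ^ 2 + d * y ^ 3) := by
  have h3 : (3 : ℕ) ≠ 0 := by decide
  simp only [← Int.not_even_iff_odd] at *
  simp only [Int.even_add, Int.even_mul, Int.even_pow] at *
  tauto

theorem stmt_1 (a b c d : ℤ) (ha : Odd a) (hbcd : Odd (b * c + d))
    (hirr : Irreducible (C (a : ℚ) * X ^ 3 + C (b : ℚ) * X ^ 2 + C (c : ℚ) * X + C (d : ℚ)))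
    (hsq : ∃ s : ℤ, b ^ 2 * c ^ 2 - 4 * a * c ^ 3 - 4 * b ^ 3 * d - 27 * a ^ 2 * d ^ 2
      + 18 * a * b * c * d = s ^ 2) :
    ∀ x y : ℤ, ¬ (x = 0 ∧ y = 0) →
      a * x ^ 3 + b * x ^ 2 * y + c * x * y ^ 2 + d * y ^ 3 ≠ 0 ∧
      3 ∣ padicValInt 2 (a * x ^ 3 + b * x ^ 2 * y + c * x * y ^ 2 + d * y ^ 3) := by
  obtain ⟨s, hs⟩ := hsq
  obtain ⟨hd, hbc⟩ := parity_of_disc_sq ha hbcd hs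
  intro x y
  induction hn : x.natAbs + y.natAbs using Nat.strong_induction_on generalizing x y with
  | _ n ih =>
    intro hxy
    by_cases he : Even x ∧ Even y
    · obtain ⟨⟨u, rfl⟩, ⟨v, rfl⟩⟩ := he
      obtain ⟨h0, h3⟩ := ih (u.natAbs + v.natAbs) (by omega) u v rfl (by omega)
      have hF : a * (u + u) ^ 3 + b * (u + u) ^ 2 * (v + v) + c * (u + u) * (v + v) ^ 2
          + d * (v + v) ^ 3
          = 2 ^ 3 * (a * u ^ 3 + b * u ^ 2 * v + c * u * v ^ 2 + d * v ^ 3) := by ring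
      have h8 : padicValInt 2 (2 ^ 3) = 3 := by
        have := padicValNat.prime_pow (p := 2) 3
        simpa [padicValInt] using this
      rw [hF]
      refine ⟨mul_ne_zero (by norm_num) h0, ?_⟩
      rw [padicValInt.mul (by norm_num) h0, h8]
      exact (dvd_refl 3).add h3
    · have hodd := form_odd ha hd hbc he
      refine ⟨fun h => by simp [h] at hodd, ?_⟩
      rw [padicValInt.eq_zero_of_not_dvd]
      · exact dvd_zero 3
      · rw [← Int.not_even_iff_odd, even_iff_two_dvd] at hodd
        exact_mod_cast hodd
end

section
/- Let m, n, k be integers with m odd, gcd(m, n) = 1, k ≠ 0, and the 2-adic valuation v₂(k) not divisible by 3. Suppose the polynomial mX³ − nX² − (n + 3m)X − m is irreducible over ℚ. Then the Thue equation mx³ − nx²y − (n + 3m)xy² − my³ = k has no solution in integers x, y. -/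
open Polynomial

/-!
Since `m` is odd, the form takes an odd value at `(x, y)` unless `x` and `y` are both even:
modulo 2 it is `1` at each of `(1, 0)`, `(0, 1)`, `(1, 1)`. When both are even, homogeneity of
degree 3 lets one halve `x` and `y` at the cost of dividing the value by `8`. By descent, every
nonzero value of the form has 2-adic valuation divisible by 3 (`three_dvd_padicValInt_form`).
-/

theorem odd_form (m n x y : ℤ) (hm : Odd m) (h : Odd x ∨ Odd y) :
    Odd (m * x ^ 3 - n * x ^ 2 * y - (n + 3 * m) * x * y ^ 2 - m * y ^ 3) := by
  rcases Int.even_or_odd x with hx | hx <;> rcases Int.even_or_odd y with hy | hy <;>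
    rcases Int.even_or_odd n with hn | hn <;>
    simp_all [← Int.not_even_iff_odd, Int.even_sub, Int.even_add, Int.even_mul, Int.even_pow] <;>
    decide

theorem three_dvd_padicValInt_form (m n : ℤ) (hm : Odd m) (N : ℕ) : ∀ x y : ℤ,
    x.natAbs + y.natAbs ≤ N →
    m * x ^ 3 - n * x ^ 2 * y - (n + 3 * m) * x * y ^ 2 - m * y ^ 3 ≠ 0 →
    3 ∣ padicValInt 2 (m * x ^ 3 - n * x ^ 2 * y - (n + 3 * m) * x * y ^ 2 - m * y ^ 3) := by
  induction N with
  | zero =>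
    intro x y hN h0
    obtain rfl : x = 0 := by omega
    obtain rfl : y = 0 := by omega
    simp at h0
  | succ N ih =>
    intro x y hN h0
    by_cases h : Odd x ∨ Odd y
    · have hodd := odd_form m n x y hm h
      rw [padicValInt.eq_zero_of_not_dvd]
      · exact dvd_zero 3
      · exact fun hd => Int.not_even_iff_odd.mpr hodd (even_iff_two_dvd.mpr (by exact_mod_cast hd))
    · rw [not_or, Int.not_odd_iff_even, Int.not_odd_iff_even] at h
      obtain ⟨⟨a, rfl⟩, ⟨b, rfl⟩⟩ := h
      have e : m * (a + a) ^ 3 - n * (a + a) ^ 2 * (b + b) - (n + 3 * m) * (a + a) * (b + b) ^ 2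
          - m * (b + b) ^ 3 = ((2 : ℕ) : ℤ) ^ 3 *
            (m * a ^ 3 - n * a ^ 2 * b - (n + 3 * m) * a * b ^ 2 - m * b ^ 3) := by
        push_cast; ring
      rw [e] at h0 ⊢
      have h0' := right_ne_zero_of_mul h0
      have key := ih a b (by omega) h0'
      have h8 : padicValInt 2 (((2 : ℕ) : ℤ) ^ 3) = 3 := by
        rw [← Nat.cast_pow, padicValInt.of_nat, padicValNat.prime_pow]
      rw [padicValInt.mul (by norm_num) h0', h8]
      exact (Nat.dvd_add_right (dvd_refl 3)).mpr key

theorem stmt_2 (m n k : ℤ) (hm : Odd m) (hgcd : Int.gcd m n = 1) (hk : k ≠ 0)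
    (hv : ¬ (3 ∣ padicValInt 2 k))
    (hirr : Irreducible (C (m : ℚ) * X ^ 3 - C (n : ℚ) * X ^ 2 - C ((n : ℚ) + 3 * m) * X
      - C (m : ℚ))) :
    ¬ ∃ x y : ℤ, m * x ^ 3 - n * x ^ 2 * y - (n + 3 * m) * x * y ^ 2 - m * y ^ 3 = k := by
  rintro ⟨x, y, rfl⟩
  exact hv (three_dvd_padicValInt_form m n hm _ x y le_rfl hk)
end

section
/- Let n, k be integers with k ≠ 0 and the 2-adic valuation v₂(k) not divisible by 3. Suppose the polynomial X³ − n(n² + n + 3)(n² + 2)X² − (n³ + 2n² + 3n + 3)X − 1 is irreducible over ℚ. Then the Thue equation x³ − n(n² + n + 3)(n² + 2)x²y − (n³ + 2n² + 3n + 3)xy² − y³ = k has no solution in integers x, y. -/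
open Polynomial

/-!
Every nonzero value of the cubic form `F(x, y)` on the left-hand side has 2-adic valuation
divisible by `3`. The key fact (`three_dvd_val`) is that this holds
for every integral form congruent mod `2` to `x³ + xy² + y³`, which has no nontrivial zero
over `𝔽₂`: an even value forces `x` and `y` to be even, and then `8` factors out.

For even `n`, `F` itself is of this shape. For odd `n`, `F ≡ (x + y)³` mod `2`, so a value is odd
unless `x = y + 2v`, and in that case `F(y + 2v, y) = 8 G(v, y)` with `G` of the above shape.
-/

lemma padicValInt_eight_mul {k : ℤ} (hk : k ≠ 0) :
    padicValInt 2 (8 * k) = 3 + padicValInt 2 k := by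
  have h8 : padicValInt 2 8 = 3 := by
    have h : (8 : ℤ) = ((2 ^ 3 : ℕ) : ℤ) := by norm_num
    rw [h, padicValInt.of_nat, padicValNat.prime_pow]
  rw [padicValInt.mul (by norm_num) hk, h8]

lemma padicValInt_of_odd {k : ℤ} (hk : Odd k) : padicValInt 2 k = 0 := by
  apply padicValInt.eq_zero_of_not_dvd
  have := Int.not_even_iff_odd.2 hk
  rwa [even_iff_two_dvd] at this

/-- Descent for forms congruent to `x³ + xy² + y³` mod `2`. -/
lemma three_dvd_val (a b c : ℤ) (ha : Even a) (hb : Odd b) (hc : Odd c) (N : ℕ) :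
    ∀ x y k : ℤ, k.natAbs ≤ N → k ≠ 0 →
      x ^ 3 + a * x ^ 2 * y + b * x * y ^ 2 + c * y ^ 3 = k → 3 ∣ padicValInt 2 k := by
  induction N with
  | zero => intro x y k h h0; omega
  | succ N ih =>
    intro x y k hN h0 hk
    by_cases hodd : Odd k
    · simp [padicValInt_of_odd hodd]
    · have hxy : Even x ∧ Even y := by
        have h1 := Int.not_even_iff_odd.2 hb
        have h2 := Int.not_even_iff_odd.2 hc
        rw [Int.not_odd_iff_even, ← hk] at hodd
        simp only [Int.even_add, Int.even_mul, Int.even_pow, ha, h1, h2] at hodd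
        by_cases hx : Even x <;> by_cases hy : Even y <;> simp_all
      obtain ⟨⟨u, rfl⟩, ⟨w, rfl⟩⟩ := hxy
      obtain ⟨l, hl⟩ : ∃ l, l = u ^ 3 + a * u ^ 2 * w + b * u * w ^ 2 + c * w ^ 3 := ⟨_, rfl⟩
      have hkl : k = 8 * l := by rw [← hk, hl]; ring
      have hl0 : l ≠ 0 := by omega
      rw [hkl, padicValInt_eight_mul hl0]
      exact (Nat.dvd_add_right (dvd_refl 3)).2 (ih u w l (by omega) hl0 hl.symm)

/-- The congruences making `F(y + 2v, y) / 8` an integral form congruent to `v³ + vy² + y³`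
mod `2`, where `F = x³ - A x²y - B xy² - y³`. -/
lemma odd_congruences (n : ℤ) (hn : Odd n) :
    (n * (n ^ 2 + n + 3) * (n ^ 2 + 2)) % 4 = 3 ∧
    (2 * (n * (n ^ 2 + n + 3) * (n ^ 2 + 2)) + (n ^ 3 + 2 * n ^ 2 + 3 * n + 3)) % 8 = 7 ∧
    (n * (n ^ 2 + n + 3) * (n ^ 2 + 2) + (n ^ 3 + 2 * n ^ 2 + 3 * n + 3)) % 16 = 8 := by
  have hn2 := Int.odd_iff.1 hn
  refine ⟨?_, ?_, ?_⟩
  · have h : n % 4 = 1 ∨ n % 4 = 3 := by omega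
    rcases h with h | h <;> simp [pow_succ, Int.add_emod, Int.mul_emod, h]
  · have h : n % 8 = 1 ∨ n % 8 = 3 ∨ n % 8 = 5 ∨ n % 8 = 7 := by omega
    rcases h with h | h | h | h <;> simp [pow_succ, Int.add_emod, Int.mul_emod, h]
  · have h : n % 16 = 1 ∨ n % 16 = 3 ∨ n % 16 = 5 ∨ n % 16 = 7 ∨ n % 16 = 9 ∨ n % 16 = 11 ∨
        n % 16 = 13 ∨ n % 16 = 15 := by omega
    rcases h with h | h | h | h | h | h | h | h <;>
      simp [pow_succ, Int.add_emod, Int.mul_emod, h]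

theorem stmt_4 (n k : ℤ) (hk : k ≠ 0) (hv : ¬ (3 ∣ padicValInt 2 k))
    (hirr : Irreducible (X ^ 3 - C ((n : ℚ) * (n ^ 2 + n + 3) * (n ^ 2 + 2)) * X ^ 2
      - C ((n : ℚ) ^ 3 + 2 * n ^ 2 + 3 * n + 3) * X - 1)) :
    ¬ ∃ x y : ℤ, x ^ 3 - n * (n ^ 2 + n + 3) * (n ^ 2 + 2) * x ^ 2 * y
      - (n ^ 3 + 2 * n ^ 2 + 3 * n + 3) * x * y ^ 2 - y ^ 3 = k := by
  rintro ⟨x, y, h⟩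
  apply hv
  rcases Int.even_or_odd n with hn | hn
  · have hA : Even (-(n * (n ^ 2 + n + 3) * (n ^ 2 + 2))) := by
      simp [hn]
    have hB : Odd (-(n ^ 3 + 2 * n ^ 2 + 3 * n + 3)) := by
      rw [← Int.not_even_iff_odd]
      simp [Int.even_add, Int.even_pow, hn]
      decide
    refine three_dvd_val _ _ (-1) hA hB (by decide) k.natAbs x y k le_rfl hk ?_
    rw [← h]; ring
  · obtain ⟨h1, h2, h3⟩ := odd_congruences n hn
    generalize n * (n ^ 2 + n + 3) * (n ^ 2 + 2) = A at h h1 h2 h3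
    generalize n ^ 3 + 2 * n ^ 2 + 3 * n + 3 = B at h h2 h3
    by_cases hodd : Odd k
    · simp [padicValInt_of_odd hodd]
    · have hA : ¬ Even A := by rw [Int.even_iff]; omega
      have hB : ¬ Even B := by rw [Int.even_iff]; omega
      have hxy : Even (x - y) := by
        rw [Int.not_odd_iff_even, ← h] at hodd
        simp only [Int.even_sub, Int.even_mul, Int.even_pow, hA, hB] at hodd ⊢
        revert hodd
        by_cases hx : Even x <;> by_cases hy : Even y <;> simp [hx, hy]
      obtain ⟨v, hxv⟩ := hxy
      obtain rfl : x = y + 2 * v := by omega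
      obtain ⟨a, ha⟩ : ∃ a, 3 - A = 4 * a := ⟨(3 - A) / 4, by omega⟩
      obtain ⟨b, hb⟩ : ∃ b, 3 - 2 * A - B = 8 * b + 4 := ⟨(3 - 2 * A - B) / 8, by omega⟩
      obtain ⟨c, hc⟩ : ∃ c, -(A + B) = 16 * c + 8 := ⟨-(A + B) / 16, by omega⟩
      obtain ⟨l, hl⟩ : ∃ l, l = v ^ 3 + (2 * a) * v ^ 2 * y + (2 * b + 1) * v * y ^ 2
        + (2 * c + 1) * y ^ 3 := ⟨_, rfl⟩
      have hkl : k = 8 * l := by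
        rw [← h, hl]
        linear_combination (4 * v ^ 2 * y) * ha + (2 * v * y ^ 2) * hb + y ^ 3 * hc
      have hl0 : l ≠ 0 := by omega
      rw [hkl, padicValInt_eight_mul hl0]
      exact (Nat.dvd_add_right (dvd_refl 3)).2
        (three_dvd_val _ _ _ (even_two_mul a) (odd_two_mul_add_one b) (odd_two_mul_add_one c)
          l.natAbs v y l le_rfl hl0 hl.symm)
end

section
/- Let n, k be integers with k ≠ 0 and the 2-adic valuation v₂(k) not divisible by 3. Suppose the polynomial X³ + (n⁷ + 2n⁶ + 3n⁵ − n⁴ − 3n³ − 3n² + 3n + 3)X² + (−n⁴ + 3n)X − 1 is irreducible over ℚ. Then the Thue equation x³ + (n⁷ + 2n⁶ + 3n⁵ − n⁴ − 3n³ − 3n² + 3n + 3)x²y + (−n⁴ + 3n)xy² − y³ = k has no solution in integers x, y. -/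
/-!
The quadratic coefficient of the cubic form is odd and its linear coefficient is even for every
integer `n`, so modulo 2 the form is `x³ + x²y + y³`, which has no nontrivial zero over `𝔽₂`.
Hence an even value of the form forces `x` and `y` to be even, and then the value is 8 times the
value at `(x/2, y/2)`. By descent, the 2-adic valuation of every nonzero value is a multiple of 3.
-/

open Polynomial

/-- A form that reduces to `x³ + x²y + y³` modulo 2 takes even values only at even arguments. -/
lemma even_args_of_even_value {a b x y k : ℤ} (ha : Odd a) (hb : Even b)
    (h : x ^ 3 + a * x ^ 2 * y + b * x * y ^ 2 - y ^ 3 = k) (hk : Even k) :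
    Even x ∧ Even y := by
  rw [← h] at hk
  have ha' : ¬ Even a := Int.not_even_iff_odd.mpr ha
  simp only [Int.even_sub, Int.even_add, Int.even_mul, Int.even_pow, hb, ha'] at hk
  by_cases hx : Even x <;> by_cases hy : Even y <;> simp_all

/-- The descent: halving both arguments divides the value by 8, hence lowers the valuation by 3. -/
lemma three_dvd_padicValInt_two {a b : ℤ} (ha : Odd a) (hb : Even b) (m : ℕ) :
    ∀ k x y : ℤ, k.natAbs = m → k ≠ 0 →
      x ^ 3 + a * x ^ 2 * y + b * x * y ^ 2 - y ^ 3 = k → 3 ∣ padicValInt 2 k := by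
  induction m using Nat.strong_induction_on with
  | _ m ih =>
    intro k x y hm hk h
    by_cases hev : Even k
    · obtain ⟨⟨u, rfl⟩, ⟨v, rfl⟩⟩ := even_args_of_even_value ha hb h hev
      obtain ⟨l, hl⟩ : ∃ l, u ^ 3 + a * u ^ 2 * v + b * u * v ^ 2 - v ^ 3 = l := ⟨_, rfl⟩
      have hkl : k = 2 ^ 3 * l := by rw [← h, ← hl]; ring
      have hl0 : l ≠ 0 := by rintro rfl; simp at hkl; exact hk hkl
      have hdvd := ih l.natAbs (by omega) l u v rfl hl0 hl
      have hval : padicValInt 2 k = 3 + padicValInt 2 l := by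
        rw [hkl, padicValInt.mul (by norm_num) hl0]
        congr 1
        exact padicValNat.prime_pow (p := 2) 3
      omega
    · rw [padicValInt.eq_zero_of_not_dvd (by rwa [even_iff_two_dvd] at hev)]
      exact dvd_zero 3

theorem stmt_5 (n k : ℤ) (hk : k ≠ 0) (hv : ¬ (3 ∣ padicValInt 2 k))
    (hirr : Irreducible (X ^ 3
      + C ((n : ℚ) ^ 7 + 2 * n ^ 6 + 3 * n ^ 5 - n ^ 4 - 3 * n ^ 3 - 3 * n ^ 2 + 3 * n + 3) * X ^ 2
      + C (-(n : ℚ) ^ 4 + 3 * n) * X - 1)) :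
    ¬ ∃ x y : ℤ, x ^ 3
      + (n ^ 7 + 2 * n ^ 6 + 3 * n ^ 5 - n ^ 4 - 3 * n ^ 3 - 3 * n ^ 2 + 3 * n + 3) * x ^ 2 * y
      + (-n ^ 4 + 3 * n) * x * y ^ 2 - y ^ 3 = k := by
  rintro ⟨x, y, h⟩
  have h3 : ¬ Even (3 : ℤ) := by decide
  refine hv (three_dvd_padicValInt_two ?_ ?_ k.natAbs k x y rfl hk h)
  · rw [← Int.not_even_iff_odd]
    simp only [Int.even_sub, Int.even_add, Int.even_mul, Int.even_pow, h3, even_two]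
    by_cases hn : Even n <;> simp [hn]
  · simp only [Int.even_add, Int.even_mul, Int.even_pow, even_neg, h3]
    by_cases hn : Even n <;> simp [hn]
end

section
/- Let K be a cubic number field with ring of integers O_K. Then 2 is a common index divisor of K (that is, 2 divides the index [O_K : ℤ[θ]] for every θ ∈ O_K with K = ℚ(θ)) if and only if the prime 2 splits completely in K, i.e., 2·O_K is a product of three distinct prime ideals of O_K. -/
/-!
Write `A = 𝓞 K ⧸ (2)`, a commutative ring with `8` elements in which `2 = 0`. The idea is that both
conditions are equivalent to `A` being a Boolean ring (`x ^ 2 = x` for all `x`).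

If `2` is a product of three distinct primes, each of them has norm `2`, so `x ^ 2 - x` lies in all
three, hence in `(2)`. Then the image of `ℤ[θ]` in `A` is `{0, 1, θ, θ + 1}`, a proper subset,
whereas a subgroup of odd index would surject onto `A`.

Conversely, if `θ ^ 2` is not in `{0, 1, θ, θ + 1}` modulo `2`, then `1, θ, θ ^ 2` span `A` over
`𝔽₂`, and Nakayama's lemma shows that `𝓞 K ⧸ ℤ[θ]` is killed by an odd integer; so `θ` generates `K`
and has odd index. Hence, if `2` is a common index divisor, every `x` in `A` satisfies
`x ^ 2 ∈ {0, 1, x, x + 1}`.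
* `x ^ 2 = x + 1` is impossible, as `A` would be a vector space over `𝔽₄`.
* A nonzero `a` with `a ^ 2 = 0` forces `x ^ 2 = 0` or `(x + 1) ^ 2 = 0` for all `x`. The ideal `M` of
  all `x` with `x ^ 2 ∈ (2)` then has norm at most `2` and `M * M ≤ (2)`; since `(2)` has norm `8`,
  this contradicts multiplicativity of the norm.

So `A` is Boolean; all primes above `2` have norm `2`, there are three of them, and since `(2)` is a
radical ideal they are distinct.
-/

open NumberField

/-! ### Commutative rings with eight elements and `2 = 0` -/

/-- If `b` is outside the `𝔽₂`-span of `1, a`, and `a` is outside that of `1`, then `1, a, b` span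
a ring with eight elements over `𝔽₂`. -/
lemma mem_span_of_card_eight {A : Type*} [CommRing A] (hA : Nat.card A = 8) (h2 : (2 : A) = 0) (a b : A)
    (ha0 : a ≠ 0) (ha1 : a ≠ 1) (hb0 : b ≠ 0) (hb1 : b ≠ 1) (hba : b ≠ a) (hba1 : b ≠ a + 1)
    (c : A) : (c = 0 ∨ c = 1 ∨ c = a ∨ c = a + 1) ∨
      (c = b ∨ c = b + 1 ∨ c = b + a ∨ c = b + a + 1) := by
  classical
  have : Finite A := Nat.finite_of_card_ne_zero (by omega)
  have := Fintype.ofFinite A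
  have : Nontrivial A := Finite.one_lt_card_iff_nontrivial.1 (by omega)
  have h10 : (1 : A) ≠ 0 := one_ne_zero
  have : CharP A 2 := CharTwo.of_one_ne_zero_of_two_eq_zero h10 h2
  have hnd : [0, 1, a, a + 1, b, b + 1, b + a, b + a + 1].Nodup := by
    simp only [List.nodup_cons, List.mem_cons, List.not_mem_nil, not_or]
    and_intros
    all_goals first | exact List.nodup_nil | exact not_false | (intro h; grind)
  have hcard := List.toFinset_card_of_nodup hnd
  have hu := Finset.eq_univ_of_card _ (hcard.trans (show _ = Fintype.card A by
    rw [← Nat.card_eq_fintype_card, hA]; simp only [List.length_cons, List.length_nil]))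
  have := Finset.mem_univ c
  rw [← hu] at this
  simpa only [List.mem_toFinset, List.mem_cons, List.not_mem_nil, or_false, or_assoc] using this

/-- An element with `w ^ 2 = w + 1` would make the ring a vector space over `𝔽₄`, of cardinality
a power of `4`. -/
lemma sq_ne_add_one {A : Type*} [CommRing A] (hA : Nat.card A = 8) (h2 : (2 : A) = 0) (w : A) :
    w ^ 2 ≠ w + 1 := by
  classical
  have : Finite A := Nat.finite_of_card_ne_zero (by omega)
  have := Fintype.ofFinite A
  have : Nontrivial A := Finite.one_lt_card_iff_nontrivial.1 (by omega)
  have h10 : (1 : A) ≠ 0 := one_ne_zero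
  intro hw
  obtain ⟨b, hb⟩ : ∃ b, b ∉ ({0, 1, w, w + 1} : Finset A) := by
    by_contra! h
    have h1 := Finset.card_le_card (fun x _ => h x : Finset.univ ⊆ _)
    rw [Finset.card_univ, ← Nat.card_eq_fintype_card, hA] at h1
    have := h1.trans Finset.card_le_four
    omega
  simp only [Finset.mem_insert, Finset.mem_singleton, not_or] at hb
  obtain ⟨hb0, hb1, hb2, hb3⟩ := hb
  have h := mem_span_of_card_eight hA h2 w b (by grind) (by grind) hb0 hb1 hb2 hb3 (w * b)
  -- `w` and `w + 1` are inverse to each other, so `b` is recovered from `w * b` or `w * b + b`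
  have e1 : b = (w + 1) * (w * b) := by linear_combination (-b) * hw - b * w * h2
  have e2 : b = w * (w * b + b) := by linear_combination (-b) * hw - b * w * h2
  rcases h with h | h
  · rcases h with h | h | h | h <;> rw [h] at e1 <;> grind
  · have : w * b + b = 0 ∨ w * b + b = 1 ∨ w * b + b = w ∨ w * b + b = w + 1 := by grind
    rcases this with h | h | h | h <;> rw [h] at e2 <;> grind

/-- If `x, y` are distinct and nonzero of square zero, then `1, x, y` span the ring; writing `x * y`
in terms of them and multiplying by `x` and by `y` gives `x * y = 0`. -/
lemma mul_eq_zero_of_sq_eq_zero {A : Type*} [CommRing A] (hA : Nat.card A = 8) (h2 : (2 : A) = 0) (x y : A)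
    (hx : x ^ 2 = 0) (hy : y ^ 2 = 0) : x * y = 0 := by
  have : Nontrivial A := by
    have : Finite A := Nat.finite_of_card_ne_zero (by omega)
    exact Finite.one_lt_card_iff_nontrivial.1 (by omega)
  have h10 : (1 : A) ≠ 0 := one_ne_zero
  by_cases hx0 : x = 0
  · simp [hx0]
  by_cases hy0 : y = 0
  · simp [hy0]
  by_cases hxy : y = x
  · rw [hxy, ← sq, hx]
  have h := mem_span_of_card_eight hA h2 x y hx0 (by grind) hy0 (by grind) hxy (by grind) (x * y)
  have e1 : x * (x * y) = 0 := by linear_combination y * hx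
  have e2 : y * (x * y) = 0 := by linear_combination x * hy
  rcases h with (h | h | h | h) | (h | h | h | h) <;> rw [h] at e1 e2 <;> grind

/-- If `a` is nonzero of square zero, then `(a + x) ^ 2 = x ^ 2` must lie both in `{0, 1, x, x + 1}`
and in `{0, 1, a + x, a + x + 1}`, which leaves only `0` and `1`. -/
lemma sq_eq_zero_or_of_nilpotent {A : Type*} [CommRing A] [Nontrivial A] (h2 : (2 : A) = 0)
    (H : ∀ x : A, x ^ 2 = 0 ∨ x ^ 2 = 1 ∨ x ^ 2 = x ∨ x ^ 2 = x + 1) (a : A) (ha : a ^ 2 = 0)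
    (ha0 : a ≠ 0) (x : A) : x ^ 2 = 0 ∨ (x + 1) ^ 2 = 0 := by
  have h10 : (1 : A) ≠ 0 := one_ne_zero
  have e : (a + x) ^ 2 = x ^ 2 := by linear_combination ha + a * x * h2
  have h1 := H (a + x)
  have h2 := H x
  rw [e] at h1
  grind

/-! ### The quotient `𝓞 K ⧸ (2)` and indices of orders -/

lemma two_quot {K : Type*} [Field K] : (2 : 𝓞 K ⧸ Ideal.span {(2 : 𝓞 K)}) = 0 := by
  have : Ideal.Quotient.mk (Ideal.span {(2 : 𝓞 K)}) 2 = 0 :=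
    Ideal.Quotient.eq_zero_iff_mem.2 (Ideal.mem_span_singleton_self 2)
  rwa [map_ofNat] at this

section
variable {K : Type*} [Field K] [NumberField K]

lemma absNorm_two (h3 : Module.finrank ℚ K = 3) :
    Ideal.absNorm (Ideal.span {(2 : 𝓞 K)}) = 8 := by
  rw [Ideal.absNorm_span_singleton]
  have := Algebra.norm_algebraMap (S := 𝓞 K) (2 : ℤ)
  rw [RingOfIntegers.rank, h3] at this
  simp only [algebraMap_int_eq, eq_intCast, Int.cast_ofNat] at this
  rw [this]; rfl

lemma card_quot_two (h3 : Module.finrank ℚ K = 3) :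
    Nat.card (𝓞 K ⧸ Ideal.span {(2 : 𝓞 K)}) = 8 := by
  rw [← absNorm_two h3]; rfl

/-- If `B` surjects onto `𝓞 K ⧸ (2)`, then by Nakayama's lemma an odd integer `r` kills
`𝓞 K ⧸ B`, which is therefore finite of odd order. -/
lemma not_two_dvd_index_of_generates_mod_two {B : Subalgebra ℤ (𝓞 K)}
    (h : ∀ x : 𝓞 K, ∃ z ∈ B, ∃ w, x = z + 2 * w) :
    (∃ r : ℤ, r ≠ 0 ∧ ∀ x : 𝓞 K, r • x ∈ B) ∧ ¬ 2 ∣ B.toSubring.toAddSubgroup.index := by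
  let N := Subalgebra.toSubmodule B
  obtain ⟨r, hr, hrN⟩ := Submodule.exists_sub_one_mem_and_smul_eq_zero_of_fg_of_le_smul
    (Ideal.span {(2 : ℤ)}) (⊤ : Submodule ℤ (𝓞 K ⧸ N)) Module.Finite.fg_top (by
      rintro y -
      obtain ⟨x, rfl⟩ := N.mkQ_surjective y
      obtain ⟨z, hz, w, rfl⟩ := h x
      have : N.mkQ (z + 2 * w) = (2 : ℤ) • N.mkQ w := by
        have hz0 : N.mkQ z = 0 := (Submodule.Quotient.mk_eq_zero N).2 hz
        rw [map_add, hz0, zero_add, ← map_smul, zsmul_eq_mul, Int.cast_ofNat]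
      rw [this]
      exact Submodule.smul_mem_smul (Ideal.mem_span_singleton_self 2) trivial)
  obtain ⟨k, hk⟩ := Ideal.mem_span_singleton.1 hr
  have hr0 : r ≠ 0 := by omega
  have hq : ∀ y : 𝓞 K ⧸ N, r • y = 0 := fun y => hrN y trivial
  refine ⟨⟨r, hr0, fun x => (Submodule.Quotient.mk_eq_zero N).1 (hq (N.mkQ x))⟩, ?_⟩
  have : Finite (𝓞 K ⧸ N) := Module.finite_of_fg_torsion _ (fun {y} =>
    ⟨⟨r, mem_nonZeroDivisors_of_ne_zero hr0⟩, hq y⟩)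
  have hi : B.toSubring.toAddSubgroup.index = Nat.card (𝓞 K ⧸ N) := rfl
  rw [hi]
  intro hd
  obtain ⟨y, hy⟩ := exists_prime_addOrderOf_dvd_card' 2 hd
  have := addOrderOf_dvd_iff_zsmul_eq_zero.2 (hq y)
  rw [hy] at this
  push_cast at this
  omega

/-- An order `ℤ[θ]` containing a nonzero multiple of `𝓞 K` has fraction field `K`. -/
lemma adjoin_top {θ : 𝓞 K}
    (h : ∃ r : ℤ, r ≠ 0 ∧ ∀ x : 𝓞 K, r • x ∈ Algebra.adjoin ℤ {θ}) :
    IntermediateField.adjoin ℚ {(θ : K)} = ⊤ := by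
  obtain ⟨r, hr, h⟩ := h
  set F := IntermediateField.adjoin ℚ {(θ : K)}
  have hA : ∀ x ∈ Algebra.adjoin ℤ {θ}, (x : K) ∈ F := by
    intro x hx
    induction hx using Algebra.adjoin_induction with
    | mem x hx =>
      rw [Set.mem_singleton_iff.1 hx]
      exact IntermediateField.mem_adjoin_simple_self ℚ _
    | algebraMap n => simp
    | add x y _ _ hx hy => simpa using add_mem hx hy
    | mul x y _ _ hx hy => simpa using mul_mem hx hy
  have hO : ∀ x : 𝓞 K, (x : K) ∈ F := by
    intro x
    have h1 := hA _ (h x)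
    have h2 : ((r • x : 𝓞 K) : K) = (r : K) * x := by simp [zsmul_eq_mul]
    rw [h2] at h1
    have h3 := mul_mem (inv_mem (intCast_mem F r)) h1
    rwa [inv_mul_cancel_left₀ (by exact_mod_cast hr)] at h3
  rw [eq_top_iff]
  rintro x -
  obtain ⟨a, b, -, rfl⟩ := IsFractionRing.div_surjective (A := 𝓞 K) x
  exact div_mem (hO a) (hO b)

/-- If `2` is a common index divisor, no element generates `𝓞 K ⧸ (2)` as a ring. -/
lemma sq_mem_span_mod_two (h3 : Module.finrank ℚ K = 3)
    (H : ∀ θ : 𝓞 K, IntermediateField.adjoin ℚ {(θ : K)} = ⊤ →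
        2 ∣ (Algebra.adjoin ℤ {θ} : Subalgebra ℤ (𝓞 K)).toSubring.toAddSubgroup.index)
    (x : 𝓞 K ⧸ Ideal.span {(2 : 𝓞 K)}) :
    x ^ 2 = 0 ∨ x ^ 2 = 1 ∨ x ^ 2 = x ∨ x ^ 2 = x + 1 := by
  by_contra! hx
  obtain ⟨hx0, hx1, hx2, hx3⟩ := hx
  obtain ⟨θ, rfl⟩ := Ideal.Quotient.mk_surjective x
  set π := Ideal.Quotient.mk (Ideal.span {(2 : 𝓞 K)})
  have hθ : θ ∈ Algebra.adjoin ℤ {θ} := Algebra.self_mem_adjoin_singleton ℤ θ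
  have hs : ∀ y : 𝓞 K, ∃ z ∈ Algebra.adjoin ℤ {θ}, ∃ w, y = z + 2 * w := by
    intro y
    have key : ∃ z ∈ Algebra.adjoin ℤ {θ}, π y = π z := by
      have := mem_span_of_card_eight (card_quot_two h3) two_quot (π θ) (π θ ^ 2) (by grind) (by grind)
        hx0 hx1 hx2 hx3 (π y)
      rcases this with (h | h | h | h) | (h | h | h | h)
      · exact ⟨0, zero_mem _, by simpa using h⟩
      · exact ⟨1, one_mem _, by simpa using h⟩
      · exact ⟨θ, hθ, h⟩
      · exact ⟨θ + 1, add_mem hθ (one_mem _), by simpa using h⟩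
      · exact ⟨θ ^ 2, pow_mem hθ 2, by simpa using h⟩
      · exact ⟨θ ^ 2 + 1, add_mem (pow_mem hθ 2) (one_mem _), by simpa using h⟩
      · exact ⟨θ ^ 2 + θ, add_mem (pow_mem hθ 2) hθ, by simpa using h⟩
      · exact ⟨θ ^ 2 + θ + 1, add_mem (add_mem (pow_mem hθ 2) hθ) (one_mem _),
          by simpa using h⟩
    obtain ⟨z, hz, h⟩ := key
    obtain ⟨w, hw⟩ := Ideal.mem_span_singleton.1 (Ideal.Quotient.eq.1 h)
    exact ⟨z, hz, w, by linear_combination hw⟩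
  obtain ⟨h1, h2⟩ := not_two_dvd_index_of_generates_mod_two hs
  exact h2 (H θ (adjoin_top h1))

/-! ### From a common index divisor to complete splitting -/

lemma absNorm_le_two {M : Ideal (𝓞 K)} (h : ∀ x : 𝓞 K, x ∈ M ∨ x - 1 ∈ M) :
    Ideal.absNorm M ≤ 2 := by
  have hs : Function.Surjective (fun b : Bool => if b then (1 : 𝓞 K ⧸ M) else 0) := by
    intro y
    obtain ⟨x, rfl⟩ := Ideal.Quotient.mk_surjective y
    rcases h x with h | h
    · exact ⟨false, by simpa using (Ideal.Quotient.eq_zero_iff_mem.2 h).symm⟩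
    · exact ⟨true, by simpa using (Ideal.Quotient.eq.2 h).symm⟩
  have := Nat.card_le_card_of_surjective _ hs
  rw [Ideal.absNorm_apply, Submodule.cardQuot_apply]
  simpa using this

/-- If no element generates `𝓞 K ⧸ (2)`, then this ring is reduced: otherwise the ideal `M` of all
`x` with `x ^ 2 ∈ (2)` would have norm at most `2`, and `M * M ≤ (2)` would give `8 ∣ 2 * 2`. -/
lemma eq_zero_of_sq_eq_zero_mod_two (h3 : Module.finrank ℚ K = 3)
    (H : ∀ x : 𝓞 K ⧸ Ideal.span {(2 : 𝓞 K)},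
      x ^ 2 = 0 ∨ x ^ 2 = 1 ∨ x ^ 2 = x ∨ x ^ 2 = x + 1)
    (a : 𝓞 K ⧸ Ideal.span {(2 : 𝓞 K)}) (ha : a ^ 2 = 0) : a = 0 := by
  by_contra ha0
  have hA := card_quot_two h3
  have : Nontrivial (𝓞 K ⧸ Ideal.span {(2 : 𝓞 K)}) := ⟨a, 0, ha0⟩
  set π := Ideal.Quotient.mk (Ideal.span {(2 : 𝓞 K)})
  let M : Ideal (𝓞 K) :=
    { carrier := {x | π x ^ 2 = 0}
      zero_mem' := by simp
      add_mem' := by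
        intro x y hx hy
        have hx : π x ^ 2 = 0 := hx
        have hy : π y ^ 2 = 0 := hy
        change π (x + y) ^ 2 = 0
        rw [map_add]
        linear_combination hx + hy + π x * π y * two_quot (K := K)
      smul_mem' := by
        intro c x hx
        have hx : π x ^ 2 = 0 := hx
        change π (c * x) ^ 2 = 0
        rw [map_mul, mul_pow, hx, mul_zero] }
  have hM2 : Ideal.absNorm M ≤ 2 := absNorm_le_two fun x => by
    refine (sq_eq_zero_or_of_nilpotent two_quot H a ha ha0 (π x)).imp id fun h => ?_
    change π (x - 1) ^ 2 = 0
    rw [map_sub, map_one]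
    linear_combination h - 2 * π x * two_quot (K := K)
  have hMM : M * M ≤ Ideal.span {2} := Ideal.mul_le.2 fun x hx y hy =>
    Ideal.Quotient.eq_zero_iff_mem.1 ((map_mul π x y).trans (mul_eq_zero_of_sq_eq_zero hA two_quot _ _ hx hy))
  have hle : Ideal.span {2} ≤ M := by
    rw [Ideal.span_singleton_le_iff_mem]
    change π 2 ^ 2 = 0
    rw [show π 2 = 2 from map_ofNat π 2, two_quot]
    simp
  have d1 := Ideal.absNorm_dvd_absNorm_of_le hMM
  have d2 := Ideal.absNorm_dvd_absNorm_of_le hle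
  rw [absNorm_two h3] at d1 d2
  rw [map_mul] at d1
  have : Ideal.absNorm M ≠ 0 := by rintro h; rw [h] at d2; omega
  have := Nat.le_of_dvd (by positivity) d1
  nlinarith

lemma sq_eq_self_mod_two (h3 : Module.finrank ℚ K = 3)
    (H : ∀ x : 𝓞 K ⧸ Ideal.span {(2 : 𝓞 K)},
      x ^ 2 = 0 ∨ x ^ 2 = 1 ∨ x ^ 2 = x ∨ x ^ 2 = x + 1)
    (x : 𝓞 K ⧸ Ideal.span {(2 : 𝓞 K)}) : x ^ 2 = x := by
  rcases H x with h | h | h | h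
  · rw [eq_zero_of_sq_eq_zero_mod_two h3 H x h]; simp
  · have := eq_zero_of_sq_eq_zero_mod_two h3 H (x - 1) (by linear_combination h + (1 - x) * two_quot (K := K))
    rw [h]; linear_combination -this
  · exact h
  · exact absurd h (sq_ne_add_one (card_quot_two h3) two_quot x)

/-- If `x ^ 2 - x ∈ I` for all `x`, then `I` is a radical ideal, so it has no repeated factor. -/
lemma ne_sq_mul_of_sq_sub_self_mem {I P J : Ideal (𝓞 K)} (hn : Ideal.absNorm I = 8)
    (hsq : ∀ x : 𝓞 K, x ^ 2 - x ∈ I) (hP : Ideal.absNorm P = 2) : I ≠ P * P * J := by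
  intro h
  have hle : P * J ≤ I := by
    intro x hx
    have h1 : x * x ∈ (P * J) * (P * J) := Ideal.mul_mem_mul hx hx
    have h2 : (P * J) * (P * J) = I * J := by
      rw [h, mul_mul_mul_comm, mul_assoc (P * P)]
    rw [h2] at h1
    have h4 : x * x ∈ I := (Ideal.mul_le_inf h1).1
    have h3 := I.sub_mem h4 (hsq x)
    rwa [sq, sub_sub_cancel] at h3
  have h1 := Ideal.absNorm_dvd_absNorm_of_le hle
  have h2 : Ideal.absNorm I = 2 * Ideal.absNorm (P * J) := by
    rw [h, mul_assoc, map_mul, hP]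
  rw [hn] at h1 h2
  have := Nat.le_of_dvd (by omega) h1
  omega

lemma splits_of_sq_eq_self (h3 : Module.finrank ℚ K = 3)
    (H : ∀ x : 𝓞 K ⧸ Ideal.span {(2 : 𝓞 K)}, x ^ 2 = x) :
    ∃ P Q R : Ideal (𝓞 K), P.IsPrime ∧ Q.IsPrime ∧ R.IsPrime ∧
      P ≠ Q ∧ P ≠ R ∧ Q ≠ R ∧ Ideal.span {(2 : 𝓞 K)} = P * Q * R := by
  classical
  set I := Ideal.span {(2 : 𝓞 K)} with hI
  have hn := absNorm_two h3
  rw [← hI] at hn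
  have hI0 : I ≠ ⊥ := by
    intro h; rw [h, Ideal.absNorm_bot] at hn; omega
  have hsq : ∀ x : 𝓞 K, x ^ 2 - x ∈ I := fun x =>
    Ideal.Quotient.eq.1 (by rw [map_pow]; exact H _)
  have hprod := Ideal.prod_normalizedFactors_eq_self hI0
  set s := UniqueFactorizationMonoid.normalizedFactors I
  have hprime : ∀ P ∈ s, P.IsPrime := fun P hP =>
    Ideal.isPrime_of_prime (UniqueFactorizationMonoid.prime_of_normalized_factor P hP)
  have hnorm : ∀ P ∈ s, Ideal.absNorm P = 2 := by
    intro P hP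
    have hIP : I ≤ P := Ideal.le_of_dvd (UniqueFactorizationMonoid.dvd_of_mem_normalizedFactors hP)
    have h1 : Ideal.absNorm P ≤ 2 := absNorm_le_two fun x =>
      (hprime P hP).mem_or_mem (by convert hIP (hsq x) using 1; ring)
    have h2 := Ideal.absNorm_dvd_absNorm_of_le hIP
    rw [hn] at h2
    have h3 : Ideal.absNorm P ≠ 0 := by rintro h; rw [h] at h2; omega
    have h4 : Ideal.absNorm P ≠ 1 := fun h =>
      (hprime P hP).ne_top (Ideal.absNorm_eq_one_iff.1 h)
    omega
  have hcard : s.card = 3 := by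
    have h1 : (s.map Ideal.absNorm).prod = 8 := by
      rw [← hn, ← hprod, map_multiset_prod]
    rw [Multiset.map_congr rfl hnorm, Multiset.map_const', Multiset.prod_replicate] at h1
    exact Nat.pow_right_injective le_rfl (h1.trans (by norm_num : 8 = 2 ^ 3))
  have hdist : ∀ P J : Ideal (𝓞 K), P ∈ s → I ≠ P * P * J := fun P J hP =>
    ne_sq_mul_of_sq_sub_self_mem hn hsq (hnorm P hP)
  obtain ⟨P, Q, R, hs⟩ := Multiset.card_eq_three.1 hcard
  have hI' : I = P * Q * R := by
    rw [← hprod, hs]; simp [mul_assoc]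
  have hP : P ∈ s := by simp [hs]
  have hQ : Q ∈ s := by simp [hs]
  have hR : R ∈ s := by simp [hs]
  refine ⟨P, Q, R, hprime P hP, hprime Q hQ, hprime R hR, ?_, ?_, ?_, hI'⟩
  · rintro rfl; exact hdist P R hP hI'
  · rintro rfl; exact hdist P Q hP (hI'.trans (by ring))
  · rintro rfl; exact hdist Q P hQ (hI'.trans (by ring))

/-! ### From complete splitting to a common index divisor -/

lemma sq_sub_self_mem_of_splits (h3 : Module.finrank ℚ K = 3) {P Q R : Ideal (𝓞 K)} (hP : P.IsPrime)
    (hQ : Q.IsPrime) (hR : R.IsPrime) (hPQ : P ≠ Q) (hPR : P ≠ R) (hQR : Q ≠ R)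
    (h : Ideal.span {(2 : 𝓞 K)} = P * Q * R) (x : 𝓞 K) : x ^ 2 - x ∈ Ideal.span {(2 : 𝓞 K)} := by
  have hn := absNorm_two h3
  rw [h, map_mul, map_mul] at hn
  have hne : ∀ {J : Ideal (𝓞 K)}, J.IsPrime → Ideal.absNorm J ≠ 1 := fun hJ h =>
    hJ.ne_top (Ideal.absNorm_eq_one_iff.1 h)
  have hp := hne hP
  have hq := hne hQ
  have hr := hne hR
  obtain ⟨h1, h2, h3⟩ : Ideal.absNorm P = 2 ∧ Ideal.absNorm Q = 2 ∧ Ideal.absNorm R = 2 := by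
    generalize Ideal.absNorm P = p at *
    generalize Ideal.absNorm Q = q at *
    generalize Ideal.absNorm R = r at *
    have p0 : p ≠ 0 := by rintro rfl; simp at hn
    have q0 : q ≠ 0 := by rintro rfl; simp at hn
    have r0 : r ≠ 0 := by rintro rfl; simp at hn
    have a : 2 ≤ p := by omega
    have b : 2 ≤ q := by omega
    have c : 2 ≤ r := by omega
    have := Nat.mul_le_mul a b
    have := Nat.mul_le_mul a c
    have := Nat.mul_le_mul b c
    refine ⟨?_, ?_, ?_⟩ <;> nlinarith
  have key : ∀ J : Ideal (𝓞 K), Ideal.absNorm J = 2 → x ^ 2 - x ∈ J := by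
    intro J hJ
    rw [Ideal.absNorm_apply, Submodule.cardQuot_apply] at hJ
    rw [← Ideal.Quotient.eq, map_pow]
    generalize Ideal.Quotient.mk J x = y
    have : Finite (𝓞 K ⧸ J) := Nat.finite_of_card_ne_zero (by omega)
    have : Nontrivial (𝓞 K ⧸ J) := Finite.one_lt_card_iff_nontrivial.1 (by omega)
    obtain ⟨u, v, huv, hu⟩ := Nat.card_eq_two_iff.1 hJ
    have e : ∀ z, z = u ∨ z = v := fun z => by
      have hz : z ∈ ({u, v} : Set (𝓞 K ⧸ J)) := hu ▸ Set.mem_univ z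
      simpa using hz
    have h10 : (1 : 𝓞 K ⧸ J) ≠ 0 := one_ne_zero
    have : y = 0 ∨ y = 1 := by
      rcases e 0 with h0 | h0 <;> rcases e 1 with h1 | h1 <;> rcases e y with hy | hy <;> simp_all
    rcases this with rfl | rfl <;> simp
  have hmax : ∀ {J : Ideal (𝓞 K)}, J.IsPrime → Ideal.absNorm J = 2 → J.IsMaximal := by
    intro J hJ hJ2
    exact hJ.isMaximal (by rintro rfl; simp at hJ2)
  have mP := hmax hP h1
  have mQ := hmax hQ h2
  have mR := hmax hR h3
  have c1 : IsCoprime P Q := Ideal.isCoprime_iff_sup_eq.2 (mP.coprime_of_ne mQ hPQ)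
  have c2 : IsCoprime P R := Ideal.isCoprime_iff_sup_eq.2 (mP.coprime_of_ne mR hPR)
  have c3 : IsCoprime Q R := Ideal.isCoprime_iff_sup_eq.2 (mQ.coprime_of_ne mR hQR)
  rw [h, Ideal.mul_eq_inf_of_isCoprime (c2.mul_left c3), Ideal.mul_eq_inf_of_isCoprime c1]
  exact ⟨⟨key P h1, key Q h2⟩, key R h3⟩

/-- If `𝓞 K ⧸ (2)` is Boolean, the image of `ℤ[θ]` in it has at most four elements; but a subgroup
of odd index `m` surjects onto it, as `m • x ≡ x` modulo `2`. -/
lemma two_dvd_index_of_sq_sub_self_mem (h3 : Module.finrank ℚ K = 3)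
    (H : ∀ x : 𝓞 K, x ^ 2 - x ∈ Ideal.span {(2 : 𝓞 K)}) (θ : 𝓞 K) :
    2 ∣ (Algebra.adjoin ℤ {θ} : Subalgebra ℤ (𝓞 K)).toSubring.toAddSubgroup.index := by
  classical
  set B := Algebra.adjoin ℤ {θ}
  by_contra hodd
  set m := B.toSubring.toAddSubgroup.index with hm
  have hA := card_quot_two h3
  set π := Ideal.Quotient.mk (Ideal.span {(2 : 𝓞 K)})
  have t2 := two_quot (K := K)
  have hB : ∀ z ∈ B, π z ∈ ({0, 1, π θ, π θ + 1} : Finset (𝓞 K ⧸ Ideal.span {(2 : 𝓞 K)})) := by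
    have hθ : π θ ^ 2 = π θ := by rw [← map_pow]; exact Ideal.Quotient.eq.2 (H θ)
    intro z hz
    simp only [Finset.mem_insert, Finset.mem_singleton]
    induction hz using Algebra.adjoin_induction with
    | mem x hx => rw [Set.mem_singleton_iff.1 hx]; simp
    | algebraMap n =>
      rcases Int.even_or_odd' n with ⟨k, rfl | rfl⟩
      · left
        simp only [algebraMap_int_eq, eq_intCast, map_intCast]
        push_cast
        linear_combination (k : 𝓞 K ⧸ Ideal.span {(2 : 𝓞 K)}) * t2
      · right; left
        simp only [algebraMap_int_eq, eq_intCast, map_intCast]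
        push_cast
        linear_combination (k : 𝓞 K ⧸ Ideal.span {(2 : 𝓞 K)}) * t2
    | add x y _ _ hx hy => rw [map_add]; grind
    | mul x y _ _ hx hy =>
      rw [map_mul]
      rcases hx with hx | hx | hx | hx <;> rcases hy with hy | hy | hy | hy <;>
        rw [hx, hy] <;> grind
  have hall : ∀ y, y ∈ ({0, 1, π θ, π θ + 1} : Finset (𝓞 K ⧸ Ideal.span {(2 : 𝓞 K)})) := by
    intro y
    obtain ⟨x, rfl⟩ := Ideal.Quotient.mk_surjective y
    have h1 : m • x ∈ B := B.toSubring.toAddSubgroup.nsmul_index_mem x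
    obtain ⟨k, hk⟩ : Odd m := by rw [← Nat.not_even_iff_odd, even_iff_two_dvd]; exact hodd
    have h2 := hB _ h1
    have : π (m • x) = π x := by
      rw [hk, nsmul_eq_mul, map_mul, map_natCast]
      push_cast
      linear_combination (k : 𝓞 K ⧸ Ideal.span {(2 : 𝓞 K)}) * π x * t2
    rwa [this] at h2
  have : Finite (𝓞 K ⧸ Ideal.span {(2 : 𝓞 K)}) := Nat.finite_of_card_ne_zero (by omega)
  have := Fintype.ofFinite (𝓞 K ⧸ Ideal.span {(2 : 𝓞 K)})
  have h1 := Finset.card_le_card (fun x _ => hall x : Finset.univ ⊆ _)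
  rw [Finset.card_univ, ← Nat.card_eq_fintype_card, hA] at h1
  have := h1.trans Finset.card_le_four
  omega

end

theorem stmt_9 (K : Type*) [Field K] [NumberField K] (h3 : Module.finrank ℚ K = 3) :
    (∀ θ : 𝓞 K, IntermediateField.adjoin ℚ {(θ : K)} = ⊤ →
        2 ∣ (Algebra.adjoin ℤ {θ} : Subalgebra ℤ (𝓞 K)).toSubring.toAddSubgroup.index) ↔
    (∃ P Q R : Ideal (𝓞 K), P.IsPrime ∧ Q.IsPrime ∧ R.IsPrime ∧
      P ≠ Q ∧ P ≠ R ∧ Q ≠ R ∧ Ideal.span {(2 : 𝓞 K)} = P * Q * R) := by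
  constructor
  · intro H
    exact splits_of_sq_eq_self h3 (sq_eq_self_mod_two h3 (sq_mem_span_mod_two h3 H))
  · rintro ⟨P, Q, R, hP, hQ, hR, hPQ, hPR, hQR, h⟩ θ -
    exact two_dvd_index_of_sq_sub_self_mem h3 (sq_sub_self_mem_of_splits h3 hP hQ hR hPQ hPR hQR h) θ
end
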